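/- arXiv:0806.4874 — 4 statements merged into one kernel-verified Lean document; each statement's English description precedes it below -/
import Mathlib

section
/- For every real path-loss exponent η ≥ 2, every κ > 0 and P > 0, every integer T ≥ 7, every integer t with 4 ≤ t ≤ T−3, and every choice of power-split parameters α_1, …, α_{T−2} ∈ [0,1], the interference power satisfies P_int(t) < 6 κ P · Σ_{n=1}^{∞} n^{−η} (where Σ_{n=1}^{∞} n^{−η} is the value of the Riemann zeta function at η). -/
/-!
By `(√x + √y)² ≤ 2 (x + y)`, interference is at most twice the sum of the received powers. At
distance `j` from the receiver, the two fractions of a node's power occur in consecutive squares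
with the same attenuation `j ^ (-η)`, so they recombine to the full power `κ P` and the splits `α`
disappear. Each side of the receiver thus contributes at most `2 κ P` times a finite partial sum of
the zeta series, which is strictly less than `ζ(η)`; this gives the constant `4`.
-/

open Finset Real

/-- Interference power at node `t` under two-hop myopic decode-forward in the
`T`-node Gaussian multiple-relay channel with unit node spacing, path-loss
exponent `η`, channel-gain constant `κ`, per-node power `P`, and power splits `α`. -/
noncomputable def Pint (η κ P : ℝ) (T t : ℕ) (α : ℕ → ℝ) : ℝ :=
  (∑ j ∈ Finset.Icc 3 (t - 2),
      (Real.sqrt ((j : ℝ) ^ (-η) * (1 - α (t - j)) * (κ * P)) +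
        Real.sqrt (((j : ℝ) + 1) ^ (-η) * α (t - j - 1) * (κ * P))) ^ 2)
  + ((t : ℝ) - 1) ^ (-η) * (1 - α 1) * (κ * P)
  + (∑ j ∈ Finset.Icc 1 (T - t - 3),
      (Real.sqrt ((j : ℝ) ^ (-η) * α (t + j) * (κ * P)) +
        Real.sqrt (((j : ℝ) + 1) ^ (-η) * (1 - α (t + j + 1)) * (κ * P))) ^ 2)
  + (Real.sqrt (((T : ℝ) - (t : ℝ) - 2) ^ (-η) * α (T - 2) * (κ * P)) +
      Real.sqrt (((T : ℝ) - (t : ℝ) - 1) ^ (-η) * (κ * P))) ^ 2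

/-- Interference from the nodes preceding node `t`, with received power `c` at unit distance:
the first two summands of `Pint`. -/
noncomputable def upstreamInterference (η c : ℝ) (t : ℕ) (α : ℕ → ℝ) : ℝ :=
  (∑ j ∈ Icc 3 (t - 2),
      (√((j : ℝ) ^ (-η) * (1 - α (t - j)) * c) +
        √(((j : ℝ) + 1) ^ (-η) * α (t - j - 1) * c)) ^ 2)
  + ((t : ℝ) - 1) ^ (-η) * (1 - α 1) * c

/-- Interference from the nodes following node `t`, with received power `c` at unit distance:
the last two summands of `Pint`. -/
noncomputable def downstreamInterference (η c : ℝ) (T t : ℕ) (α : ℕ → ℝ) : ℝ :=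
  (∑ j ∈ Icc 1 (T - t - 3),
      (√((j : ℝ) ^ (-η) * α (t + j) * c) +
        √(((j : ℝ) + 1) ^ (-η) * (1 - α (t + j + 1)) * c)) ^ 2)
  + (√(((T : ℝ) - (t : ℝ) - 2) ^ (-η) * α (T - 2) * c) +
      √(((T : ℝ) - (t : ℝ) - 1) ^ (-η) * c)) ^ 2

lemma Pint_eq_upstream_add_downstream (η κ P : ℝ) (T t : ℕ) (α : ℕ → ℝ) :
    Pint η κ P T t α =
      upstreamInterference η (κ * P) t α + downstreamInterference η (κ * P) T t α :=
  add_assoc _ _ _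

lemma sq_sqrt_add_sqrt_le {x y : ℝ} (hx : 0 ≤ x) (hy : 0 ≤ y) :
    (√x + √y) ^ 2 ≤ 2 * (x + y) := by
  simpa only [sq_sqrt hx, sq_sqrt hy] using add_sq_le (a := √x) (b := √y)

lemma sum_Ico_sq_sqrt_add_sqrt_succ_le {p q : ℕ → ℝ} {a b : ℕ} (hab : a ≤ b)
    (hp : ∀ j ∈ Ico a b, 0 ≤ p j) (hq : ∀ j ∈ Ico a b, 0 ≤ q (j + 1)) :
    ∑ j ∈ Ico a b, (√(p j) + √(q (j + 1))) ^ 2 + 2 * (q a + p b) ≤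
      2 * ∑ j ∈ Ico a (b + 1), (p j + q j) := by
  have hsum_p : ∑ j ∈ Ico a (b + 1), p j = ∑ j ∈ Ico a b, p j + p b :=
    sum_Ico_succ_top hab p
  have hsum_q : ∑ j ∈ Ico a (b + 1), q j = q a + ∑ j ∈ Ico a b, q (j + 1) := by
    rw [sum_eq_sum_Ico_succ_bot (by lia), sum_Ico_add']
  calc ∑ j ∈ Ico a b, (√(p j) + √(q (j + 1))) ^ 2 + 2 * (q a + p b)
      ≤ ∑ j ∈ Ico a b, 2 * (p j + q (j + 1)) + 2 * (q a + p b) := by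
        gcongr with j hj
        exact sq_sqrt_add_sqrt_le (hp j hj) (hq j hj)
    _ = 2 * ∑ j ∈ Ico a (b + 1), (p j + q j) := by
        rw [← mul_sum, sum_add_distrib, sum_add_distrib, hsum_p, hsum_q]
        ring

lemma sum_Ico_sq_sqrt_split_le {w β : ℕ → ℝ} {c : ℝ} {a b : ℕ} (hab : a ≤ b) (hc : 0 ≤ c)
    (hw : ∀ j, 0 ≤ w j) (hβ : ∀ j ∈ Icc a b, β j ∈ Set.Icc (0 : ℝ) 1) :
    ∑ j ∈ Ico a b, (√(w j * β j * c) + √(w (j + 1) * (1 - β (j + 1)) * c)) ^ 2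
        + 2 * (w b * β b * c) ≤
      2 * c * ∑ j ∈ Ico a (b + 1), w j := by
  set p : ℕ → ℝ := fun j => w j * β j * c with hp
  set q : ℕ → ℝ := fun j => w j * (1 - β j) * c with hq
  have hp_nonneg (j : ℕ) (hj : j ∈ Icc a b) : 0 ≤ p j :=
    mul_nonneg (mul_nonneg (hw j) (hβ j hj).1) hc
  have hq_nonneg (j : ℕ) (hj : j ∈ Icc a b) : 0 ≤ q j :=
    mul_nonneg (mul_nonneg (hw j) (sub_nonneg.2 (hβ j hj).2)) hc
  have hrecombine : ∑ j ∈ Ico a (b + 1), (p j + q j) = c * ∑ j ∈ Ico a (b + 1), w j := by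
    rw [mul_sum]
    exact sum_congr rfl fun j _ => by simp only [hp, hq]; ring
  have hsum := sum_Ico_sq_sqrt_add_sqrt_succ_le hab
    (fun j hj => hp_nonneg j (Ico_subset_Icc_self hj))
    (fun j hj => hq_nonneg (j + 1) (by rw [mem_Ico] at hj; rw [mem_Icc]; lia))
  have hfirst : 0 ≤ q a := hq_nonneg a (left_mem_Icc.2 hab)
  linarith

lemma upstreamInterference_le (η : ℝ) {c : ℝ} (hc : 0 ≤ c) {t : ℕ} (ht : 4 ≤ t) {α : ℕ → ℝ}
    (hα : ∀ i, 1 ≤ i → i ≤ t - 3 → α i ∈ Set.Icc (0 : ℝ) 1) :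
    upstreamInterference η c t α ≤ 2 * c * ∑ j ∈ Ico 3 t, (j : ℝ) ^ (-η) := by
  obtain ⟨s, rfl⟩ : ∃ s, t = s + 4 := ⟨t - 4, by lia⟩
  have hβ (j : ℕ) (hj : j ∈ Icc 3 (s + 3)) : 1 - α (s + 4 - j) ∈ Set.Icc (0 : ℝ) 1 := by
    rw [mem_Icc] at hj
    exact Set.Icc.mem_iff_one_sub_mem.1 (hα (s + 4 - j) (by lia) (by lia))
  have hsquares := sum_Ico_sq_sqrt_split_le (w := fun j => (j : ℝ) ^ (-η)) (by lia) hc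
    (fun j => by positivity) hβ
  have hfar : 0 ≤ ((s + 3 : ℕ) : ℝ) ^ (-η) * (1 - α 1) * c :=
    mul_nonneg (mul_nonneg (by positivity) (sub_nonneg.2 (hα 1 le_rfl (by lia)).2)) hc
  have hdist : ((s + 4 : ℕ) : ℝ) - 1 = (s + 3 : ℕ) := by push_cast; ring
  have hnode : s + 4 - (s + 3) = 1 := by lia
  have hrange : Icc 3 (s + 4 - 2) = Ico 3 (s + 3) := rfl
  rw [upstreamInterference, hdist, hrange]
  simp only [sub_sub_cancel, hnode, Nat.cast_add_one, Nat.sub_sub] at hsquares hfar ⊢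
  linarith

lemma downstreamInterference_le (η : ℝ) {c : ℝ} (hc : 0 ≤ c) {T t : ℕ} (htT : t + 3 ≤ T)
    {α : ℕ → ℝ} (hα : ∀ i, t + 1 ≤ i → i ≤ T - 2 → α i ∈ Set.Icc (0 : ℝ) 1) :
    downstreamInterference η c T t α ≤ 2 * c * ∑ j ∈ Ico 1 (T - t), (j : ℝ) ^ (-η) := by
  obtain ⟨m, rfl⟩ : ∃ m, T = t + (m + 3) := ⟨T - t - 3, by lia⟩
  have hβ (j : ℕ) (hj : j ∈ Icc 1 (m + 1)) : α (t + j) ∈ Set.Icc (0 : ℝ) 1 := by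
    rw [mem_Icc] at hj
    exact hα (t + j) (by lia) (by lia)
  have hsquares := sum_Ico_sq_sqrt_split_le (w := fun j => (j : ℝ) ^ (-η)) (by lia) hc
    (fun j => by positivity) hβ
  have hlast : (√(((m + 1 : ℕ) : ℝ) ^ (-η) * α (t + (m + 1)) * c) +
      √(((m + 2 : ℕ) : ℝ) ^ (-η) * c)) ^ 2 ≤
      2 * (((m + 1 : ℕ) : ℝ) ^ (-η) * α (t + (m + 1)) * c + ((m + 2 : ℕ) : ℝ) ^ (-η) * c) :=
    sq_sqrt_add_sqrt_le
      (mul_nonneg (mul_nonneg (by positivity) (hβ (m + 1) (by simp)).1) hc) (by positivity)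
  have hdist : ((t + (m + 3) : ℕ) : ℝ) - t - 2 = (m + 1 : ℕ) := by push_cast; ring
  have hdist' : ((t + (m + 3) : ℕ) : ℝ) - t - 1 = (m + 2 : ℕ) := by push_cast; ring
  have hnode : t + (m + 3) - 2 = t + (m + 1) := rfl
  have hrange : Icc 1 m = Ico 1 (m + 1) := rfl
  have hlast_distance : ∑ j ∈ Ico 1 (m + 3), (j : ℝ) ^ (-η) =
      ∑ j ∈ Ico 1 (m + 2), (j : ℝ) ^ (-η) + ((m + 2 : ℕ) : ℝ) ^ (-η) :=
    sum_Ico_succ_top (by lia) _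
  rw [downstreamInterference, hdist, hdist', hnode, Nat.add_sub_cancel_left, Nat.add_sub_cancel,
    hrange, hlast_distance]
  simp only [Nat.cast_add_one, ← add_assoc] at hsquares hlast ⊢
  linarith

/-- A member `0` of `s` contributes nothing, since `Real.rpow` has `0 ^ (-η) = 0` for `η ≠ 0`. -/
lemma sum_rpow_neg_lt_tsum {η : ℝ} (hη : 1 < η) (s : Finset ℕ) :
    ∑ j ∈ s, (j : ℝ) ^ (-η) < ∑' n : ℕ, ((n : ℝ) + 1) ^ (-η) := by
  have hsummable : Summable fun n : ℕ => (n : ℝ) ^ (-η) :=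
    summable_nat_rpow.2 (neg_lt_neg hη)
  have hshift : ∑' n : ℕ, (n : ℝ) ^ (-η) = ∑' n : ℕ, ((n : ℝ) + 1) ^ (-η) := by
    rw [hsummable.tsum_eq_zero_add, Nat.cast_zero, zero_rpow (by linarith), zero_add]
    simp only [Nat.cast_add_one]
  obtain ⟨k, hk⟩ := Infinite.exists_notMem_finset (insert 0 s)
  rw [mem_insert, not_or] at hk
  have hk_pos : 0 < (k : ℝ) ^ (-η) :=
    rpow_pos_of_pos (Nat.cast_pos.2 (Nat.pos_of_ne_zero hk.1)) _
  calc ∑ j ∈ s, (j : ℝ) ^ (-η)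
      < ∑ j ∈ insert k s, (j : ℝ) ^ (-η) := by
        rw [sum_insert hk.2]
        exact lt_add_of_pos_left _ hk_pos
    _ ≤ ∑' n : ℕ, (n : ℝ) ^ (-η) := hsummable.sum_le_tsum _ fun n _ => by positivity
    _ = ∑' n : ℕ, ((n : ℝ) + 1) ^ (-η) := hshift

theorem pint_lt_six_kP_zeta_general {η κ P : ℝ} (hη : 1 < η) (hκ : 0 < κ) (hP : 0 < P)
    {T t : ℕ} (ht : 4 ≤ t) (htT : t + 3 ≤ T)
    {α : ℕ → ℝ} (hα : ∀ i, 1 ≤ i → i ≤ T - 2 → α i ∈ Set.Icc (0 : ℝ) 1) :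
    Pint η κ P T t α < 4 * κ * P * ∑' n : ℕ, ((n : ℝ) + 1) ^ (-η) := by
  have hc : 0 < κ * P := mul_pos hκ hP
  calc Pint η κ P T t α
      = upstreamInterference η (κ * P) t α + downstreamInterference η (κ * P) T t α :=
        Pint_eq_upstream_add_downstream η κ P T t α
    _ ≤ 2 * (κ * P) * ∑ j ∈ Ico 3 t, (j : ℝ) ^ (-η) +
          2 * (κ * P) * ∑ j ∈ Ico 1 (T - t), (j : ℝ) ^ (-η) :=
        add_le_add
          (upstreamInterference_le η hc.le ht fun i h1 hi => hα i h1 (by lia))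
          (downstreamInterference_le η hc.le htT fun i hi hiT => hα i (by lia) hiT)
    _ < 2 * (κ * P) * ∑' n : ℕ, ((n : ℝ) + 1) ^ (-η) +
          2 * (κ * P) * ∑' n : ℕ, ((n : ℝ) + 1) ^ (-η) := by
        gcongr <;> exact sum_rpow_neg_lt_tsum hη _
    _ = 4 * κ * P * ∑' n : ℕ, ((n : ℝ) + 1) ^ (-η) := by ring

/-- The interference power at any interior node `t` (with `4 ≤ t ≤ T − 3`) is
strictly less than `6 κ P ζ(η)`, where `ζ(η) = ∑_{n=1}^∞ n^{−η}`. -/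
theorem pint_lt_six_kP_zeta
    (η κ P : ℝ) (hη : 2 ≤ η) (hκ : 0 < κ) (hP : 0 < P)
    (T t : ℕ) (hT : 7 ≤ T) (ht4 : 4 ≤ t) (htT : t ≤ T - 3)
    (α : ℕ → ℝ) (hα : ∀ i, 1 ≤ i → i ≤ T - 2 → α i ∈ Set.Icc (0 : ℝ) 1) :
    Pint η κ P T t α < 6 * κ * P * ∑' n : ℕ, ((n : ℝ) + 1) ^ (-η) := by
  refine (pint_lt_six_kP_zeta_general (by linarith) hκ hP ht4 (by lia) hα).trans_le ?_
  exact mul_le_mul_of_nonneg_right (by gcongr; norm_num) (tsum_nonneg fun n => by positivity)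
end

section
/- For every real path-loss exponent η ≥ 2, every κ > 0 and P > 0, every integer T ≥ 7, every integer t with 4 ≤ t ≤ T−3, and every choice of power-split parameters α_1, …, α_{T−2} ∈ [0,1], the interference power satisfies P_int(t) ≤ κP · (Σ_{j=3}^{t−1} j^{−η} + Σ_{j=1}^{T−t−1} j^{−η} + 2 Σ_{j=3}^{t−2} j^{−η} + 2 Σ_{j=1}^{T−t−2} j^{−η}) ≤ 6 κP · Σ_{j=1}^{T} j^{−η}. -/
/-!
In each squared sum of `P_int(t)`, the cross term is at most twice the power that the nearer node
would deliver in full, because the gain decreases with distance. The remaining terms regroup by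
transmitting node: the two parts of a node add up to its full received power, apart from the nearest
node on each side, one of whose parts is missing. Node `T - 1` fits this pattern with
`α (T - 1) = 0`.
-/

open Finset Real

lemma sqrt_add_sqrt_sq_le {p q r : ℝ} (hp : 0 ≤ p) (hq : 0 ≤ q) (hpr : p ≤ r) (hqr : q ≤ r) :
    (√p + √q) ^ 2 ≤ p + q + 2 * r := by
  have cross : √p * √q ≤ r :=
    calc √p * √q ≤ √r * √r := by gcongr
      _ = r := Real.mul_self_sqrt (hp.trans hpr)
  rw [add_sq, Real.sq_sqrt hp, Real.sq_sqrt hq]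
  linarith

/-- Interference received from the nodes on one side of the receiver, at distances `a, …, n + 1`,
where `g j` is the gain at distance `j` and `c` the power at unit gain. The node at distance `j`
splits its power into the fractions `β j` and `1 - β j`, of which the latter adds coherently to the
fraction `β (j + 1)` of the next farther node. The fraction `β a` of the nearest node does not
interfere, and the fraction `1 - β (n + 1)` of the farthest one arrives alone. -/
noncomputable def sideInterference (g β : ℕ → ℝ) (c : ℝ) (a n : ℕ) : ℝ :=
  (∑ j ∈ Icc a n, (√(g j * (1 - β j) * c) + √(g (j + 1) * β (j + 1) * c)) ^ 2)
    + g (n + 1) * (1 - β (n + 1)) * c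

theorem sideInterference_le {g β : ℕ → ℝ} {c : ℝ} {a n : ℕ} (han : a ≤ n + 1) (hc : 0 ≤ c)
    (hg : AntitoneOn g (Set.Icc a (n + 1))) (hg₀ : ∀ j ∈ Set.Icc a (n + 1), 0 ≤ g j)
    (hβ : ∀ j ∈ Set.Icc a (n + 1), β j ∈ Set.Icc (0 : ℝ) 1) :
    sideInterference g β c a n ≤ c * (∑ j ∈ Icc a (n + 1), g j + 2 * ∑ j ∈ Icc a n, g j) := by
  have pair_le : ∀ j ∈ Icc a n,
      (√(g j * (1 - β j) * c) + √(g (j + 1) * β (j + 1) * c)) ^ 2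
        ≤ c * (3 * g j + (g (j + 1) * β (j + 1) - g j * β j)) := by
    intro j hj
    obtain ⟨haj, hjn⟩ := Finset.mem_Icc.mp hj
    have near : j ∈ Set.Icc a (n + 1) := ⟨haj, by omega⟩
    have far : j + 1 ∈ Set.Icc a (n + 1) := ⟨by omega, by omega⟩
    have near_frac := Set.Icc.one_sub_mem (hβ j near)
    have near_le : g j * (1 - β j) ≤ g j := mul_le_of_le_one_right (hg₀ j near) near_frac.2
    have far_le : g (j + 1) * β (j + 1) ≤ g j :=
      (mul_le_of_le_one_right (hg₀ _ far) (hβ _ far).2).trans (hg near far j.le_succ)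
    have cross_bounded := sqrt_add_sqrt_sq_le
      (mul_nonneg (mul_nonneg (hg₀ j near) near_frac.1) hc)
      (mul_nonneg (mul_nonneg (hg₀ _ far) (hβ _ far).1) hc)
      (mul_le_mul_of_nonneg_right near_le hc) (mul_le_mul_of_nonneg_right far_le hc)
    linarith
  have nearest : a ∈ Set.Icc a (n + 1) := ⟨le_rfl, han⟩
  have missing_nonneg : 0 ≤ c * (g a * β a) :=
    mul_nonneg hc (mul_nonneg (hg₀ a nearest) (hβ a nearest).1)
  have regroup := Finset.sum_le_sum pair_le
  rw [← Finset.mul_sum, Finset.sum_add_distrib, ← Finset.mul_sum,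
    ← Finset.Ico_add_one_right_eq_Icc a n, Finset.sum_Ico_sub (fun j => g j * β j) han,
    Finset.Ico_add_one_right_eq_Icc] at regroup
  rw [sideInterference, Finset.sum_Icc_succ_top han]
  linarith

lemma sideInterference_upstream (g α : ℕ → ℝ) (c : ℝ) {t : ℕ} (ht : 2 ≤ t) (a : ℕ) :
    sideInterference g (fun j => α (t - j)) c a (t - 2) =
      (∑ j ∈ Icc a (t - 2), (√(g j * (1 - α (t - j)) * c) + √(g (j + 1) * α (t - j - 1) * c)) ^ 2)
        + g (t - 1) * (1 - α 1) * c := by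
  simp only [sideInterference, Nat.sub_sub, show t - 2 + 1 = t - 1 by omega,
    show t - (t - 1) = 1 by omega]

lemma sideInterference_downstream (g α : ℕ → ℝ) (c : ℝ) (t m : ℕ) {a : ℕ} (ha : a ≤ m + 1) :
    sideInterference g (fun j => 1 - Function.update α (t + m + 2) 0 (t + j)) c a (m + 1) =
      (∑ j ∈ Icc a m, (√(g j * α (t + j) * c) + √(g (j + 1) * (1 - α (t + j + 1)) * c)) ^ 2)
        + (√(g (m + 1) * α (t + m + 1) * c) + √(g (m + 2) * c)) ^ 2 := by
  have last : Function.update α (t + m + 2) 0 (t + (m + 1 + 1)) = 0 := Function.update_self ..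
  have before_last {j : ℕ} (hj : j ≤ m + 1) :
      Function.update α (t + m + 2) 0 (t + j) = α (t + j) :=
    Function.update_of_ne (by omega) _ _
  rw [sideInterference, Finset.sum_Icc_succ_top ha, last, before_last le_rfl]
  simp only [sub_sub_cancel, sub_zero, sub_self, mul_one, mul_zero, zero_mul, add_zero]
  congr 1
  refine Finset.sum_congr rfl fun j hj => ?_
  have hjm := (Finset.mem_Icc.mp hj).2
  rw [before_last (by omega), before_last (by omega), add_assoc t]

theorem pint_eq_sideInterference_add (η κ P : ℝ) {t : ℕ} (ht : 2 ≤ t) (m : ℕ) (α : ℕ → ℝ) :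
    Pint η κ P (t + m + 3) t α =
      sideInterference (fun j => (j : ℝ) ^ (-η)) (fun j => α (t - j)) (κ * P) 3 (t - 2)
      + sideInterference (fun j => (j : ℝ) ^ (-η))
          (fun j => 1 - Function.update α (t + m + 2) 0 (t + j)) (κ * P) 1 (m + 1) := by
  have farthest : (t : ℝ) - 1 = (t - 1 : ℕ) := (Nat.cast_pred (by omega)).symm
  have penultimate : ((t + m + 3 : ℕ) : ℝ) - t - 2 = (m + 1 : ℕ) := by push_cast; ring
  have last : ((t + m + 3 : ℕ) : ℝ) - t - 1 = (m + 2 : ℕ) := by push_cast; ring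
  rw [sideInterference_upstream _ _ _ ht, sideInterference_downstream _ _ _ _ _ (by omega), Pint,
    farthest, penultimate, last, show t + m + 3 - t - 3 = m by omega,
    show t + m + 3 - 2 = t + m + 1 by omega]
  simp only [Nat.cast_succ, add_assoc]

lemma antitoneOn_natCast_rpow_neg {η : ℝ} (hη : 0 ≤ η) :
    AntitoneOn (fun j : ℕ => (j : ℝ) ^ (-η)) (Set.Ici 1) := fun _ hi _ _ hij =>
  Real.rpow_le_rpow_of_nonpos (Nat.cast_pos.mpr hi) (Nat.cast_le.mpr hij) (neg_nonpos.mpr hη)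

theorem pint_le {η κ P : ℝ} (hη : 0 ≤ η) (hκP : 0 ≤ κ * P) {t : ℕ} (ht : 4 ≤ t) (m : ℕ)
    {α : ℕ → ℝ} (hα : ∀ i, 1 ≤ i → i ≤ t + m + 1 → α i ∈ Set.Icc (0 : ℝ) 1) :
    Pint η κ P (t + m + 3) t α ≤
      κ * P * ((∑ j ∈ Icc 3 (t - 1), (j : ℝ) ^ (-η)) + (∑ j ∈ Icc 1 (m + 2), (j : ℝ) ^ (-η))
        + 2 * (∑ j ∈ Icc 3 (t - 2), (j : ℝ) ^ (-η))
        + 2 * (∑ j ∈ Icc 1 (m + 1), (j : ℝ) ^ (-η))) := by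
  have gain_antitone {a n : ℕ} (ha : 1 ≤ a) :
      AntitoneOn (fun j : ℕ => (j : ℝ) ^ (-η)) (Set.Icc a n) :=
    (antitoneOn_natCast_rpow_neg hη).mono fun _ hj => ha.trans hj.1
  have split_mem : ∀ i, 1 ≤ i → i ≤ t + m + 2 →
      Function.update α (t + m + 2) 0 i ∈ Set.Icc (0 : ℝ) 1 := by
    intro i hi hit
    rcases eq_or_ne i (t + m + 2) with rfl | hne
    · rw [Function.update_self]
      exact Set.left_mem_Icc.mpr zero_le_one
    · rw [Function.update_of_ne hne]
      exact hα i hi (by omega)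
  have upstream := sideInterference_le (β := fun j => α (t - j)) (n := t - 2) (by omega) hκP
    (gain_antitone (a := 3) (by omega)) (fun j _ => by positivity)
    (fun j ⟨_, _⟩ => hα _ (by omega) (by omega))
  have downstream := sideInterference_le (n := m + 1)
    (β := fun j => 1 - Function.update α (t + m + 2) 0 (t + j)) (by omega) hκP
    (gain_antitone le_rfl) (fun j _ => by positivity)
    (fun j ⟨_, _⟩ => Set.Icc.one_sub_mem (split_mem _ (by omega) (by omega)))
  rw [show t - 2 + 1 = t - 1 by omega] at upstream
  rw [pint_eq_sideInterference_add η κ P (by omega)]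
  linarith

theorem pint_le_partial_sums_general
    (η κ P : ℝ) (hη : 0 ≤ η) (hκP : 0 ≤ κ * P) (T t : ℕ) (ht4 : 4 ≤ t) (htT : t ≤ T - 3)
    (α : ℕ → ℝ) (hα : ∀ i, 1 ≤ i → i ≤ T - 2 → α i ∈ Set.Icc (0 : ℝ) 1) :
    Pint η κ P T t α ≤
      κ * P * ((∑ j ∈ Finset.Icc 3 (t - 1), (j : ℝ) ^ (-η))
        + (∑ j ∈ Finset.Icc 1 (T - t - 1), (j : ℝ) ^ (-η))
        + 2 * (∑ j ∈ Finset.Icc 3 (t - 2), (j : ℝ) ^ (-η))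
        + 2 * (∑ j ∈ Finset.Icc 1 (T - t - 2), (j : ℝ) ^ (-η)))
    ∧ κ * P * ((∑ j ∈ Finset.Icc 3 (t - 1), (j : ℝ) ^ (-η))
        + (∑ j ∈ Finset.Icc 1 (T - t - 1), (j : ℝ) ^ (-η))
        + 2 * (∑ j ∈ Finset.Icc 3 (t - 2), (j : ℝ) ^ (-η))
        + 2 * (∑ j ∈ Finset.Icc 1 (T - t - 2), (j : ℝ) ^ (-η)))
      ≤ 6 * (κ * P) * ∑ j ∈ Finset.Icc 1 T, (j : ℝ) ^ (-η) := by
  constructor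
  · obtain ⟨m, rfl⟩ : ∃ m, T = t + m + 3 := ⟨T - t - 3, by omega⟩
    rw [show t + m + 3 - t - 1 = m + 2 by omega, show t + m + 3 - t - 2 = m + 1 by omega]
    exact pint_le hη hκP ht4 m hα
  · have partial_sum_le (a b : ℕ) (ha : 1 ≤ a) (hb : b ≤ T) :
        ∑ j ∈ Icc a b, (j : ℝ) ^ (-η) ≤ ∑ j ∈ Icc 1 T, (j : ℝ) ^ (-η) :=
      Finset.sum_le_sum_of_subset_of_nonneg (Finset.Icc_subset_Icc ha hb)
        fun j _ _ => by positivity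
    rw [mul_comm 6 (κ * P), mul_assoc (κ * P) 6]
    refine mul_le_mul_of_nonneg_left ?_ hκP
    linarith [partial_sum_le 3 (t - 1) (by omega) (by omega),
      partial_sum_le 1 (T - t - 1) (by omega) (by omega),
      partial_sum_le 3 (t - 2) (by omega) (by omega),
      partial_sum_le 1 (T - t - 2) (by omega) (by omega)]

/-- Chain of bounds on the interference power:
`P_int(t) ≤ κP (∑_{j=3}^{t−1} j^{−η} + ∑_{j=1}^{T−t−1} j^{−η}
  + 2∑_{j=3}^{t−2} j^{−η} + 2∑_{j=1}^{T−t−2} j^{−η}) ≤ 6 κP ∑_{j=1}^{T} j^{−η}`. -/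
theorem pint_le_partial_sums
    (η κ P : ℝ) (hη : 2 ≤ η) (hκ : 0 < κ) (hP : 0 < P)
    (T t : ℕ) (hT : 7 ≤ T) (ht4 : 4 ≤ t) (htT : t ≤ T - 3)
    (α : ℕ → ℝ) (hα : ∀ i, 1 ≤ i → i ≤ T - 2 → α i ∈ Set.Icc (0 : ℝ) 1) :
    Pint η κ P T t α ≤
      κ * P * ((∑ j ∈ Finset.Icc 3 (t - 1), (j : ℝ) ^ (-η))
        + (∑ j ∈ Finset.Icc 1 (T - t - 1), (j : ℝ) ^ (-η))
        + 2 * (∑ j ∈ Finset.Icc 3 (t - 2), (j : ℝ) ^ (-η))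
        + 2 * (∑ j ∈ Finset.Icc 1 (T - t - 2), (j : ℝ) ^ (-η)))
    ∧ κ * P * ((∑ j ∈ Finset.Icc 3 (t - 1), (j : ℝ) ^ (-η))
        + (∑ j ∈ Finset.Icc 1 (T - t - 1), (j : ℝ) ^ (-η))
        + 2 * (∑ j ∈ Finset.Icc 3 (t - 2), (j : ℝ) ^ (-η))
        + 2 * (∑ j ∈ Finset.Icc 1 (T - t - 2), (j : ℝ) ^ (-η)))
      ≤ 6 * (κ * P) * ∑ j ∈ Finset.Icc 1 T, (j : ℝ) ^ (-η) :=
  pint_le_partial_sums_general η κ P (zero_le_two.trans hη) (mul_pos hκ hP).le T t ht4 htT α hα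
end

section
/- For every real path-loss exponent η ≥ 2 and all κ, P, N > 0, there exists δ > 0 such that for every integer T ≥ 7 there exist power splits α_1, …, α_{T−2} ∈ [0,1] with R_t ≥ δ for every integer t with 4 ≤ t ≤ T−3; that is, the two-hop myopic decode-forward reception rates remain bounded away from zero, uniformly in the network size T, as T grows without bound. -/
/-!
Whatever the power splits, node `t` receives at least `2 ^ (-η) κP`: the power of node `t - 2` that
is not spent on the first signal component of `t` is spent on the second, and superposing the
amplitudes of other nodes coherently only helps. An interfering pair of nodes at distances `j` and
`j + 1` contributes at most `4 j ^ (-η) κP`, because `(x + y)² ≤ 2 (x² + y²)`. Since `η > 1`, these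
bounds are summable over all distances, so the signal-to-interference-plus-noise ratio is bounded
below independently of `t`, `T` and the splits.
-/

open Finset Real

/-- Coherently combined signal power at node `t` under two-hop myopic
decode-forward in the equally-spaced Gaussian multiple-relay channel. -/
noncomputable def Psig (η κ P : ℝ) (t : ℕ) (α : ℕ → ℝ) : ℝ :=
  (Real.sqrt ((3 : ℝ) ^ (-η) * α (t - 3) * (κ * P)) +
      Real.sqrt ((2 : ℝ) ^ (-η) * (1 - α (t - 2)) * (κ * P))) ^ 2
  + (Real.sqrt ((2 : ℝ) ^ (-η) * α (t - 2) * (κ * P)) +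
      Real.sqrt ((1 - α (t - 1)) * (κ * P))) ^ 2

/-- Reception rate at node `t`: `R_t = ½ log₂(1 + P_sig(t)/(P_int(t) + N))`. -/
noncomputable def Rt (η κ P N : ℝ) (T t : ℕ) (α : ℕ → ℝ) : ℝ :=
  (1 / 2) * Real.logb 2 (1 + Psig η κ P t α / (Pint η κ P T t α + N))

lemma le_sq_add_sqrt {x : ℝ} (hx : 0 ≤ x) (y : ℝ) : y ≤ (x + √y) ^ 2 :=
  (Real.sqrt_le_iff.mp (le_add_of_nonneg_left hx)).2

lemma sq_sqrt_add_sqrt_le_of_mem_Icc {g h a b q : ℝ} (hg : 0 ≤ g) (hh : 0 ≤ h) (hhg : h ≤ g)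
    (ha : a ∈ Set.Icc (0 : ℝ) 1) (hb : b ∈ Set.Icc (0 : ℝ) 1) (hq : 0 ≤ q) :
    (√(g * a * q) + √(h * b * q)) ^ 2 ≤ 4 * g * q := by
  have hga : g * a ≤ g := mul_le_of_le_one_right hg ha.2
  have hhb : h * b ≤ g := (mul_le_of_le_one_right hh hb.2).trans hhg
  calc (√(g * a * q) + √(h * b * q)) ^ 2
      ≤ 2 * (g * a * q + h * b * q) :=
        sq_sqrt_add_sqrt_le (mul_nonneg (mul_nonneg hg ha.1) hq)
          (mul_nonneg (mul_nonneg hh hb.1) hq)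
    _ ≤ 2 * (g * q + g * q) := by gcongr
    _ = 4 * g * q := by ring

/-- The sum `∑ j ^ (-η)` of the path gains from one node at each distance `j ≥ 1`; for `η ≠ 0` the
term `j = 0` is `0`. -/
noncomputable def totalPathGain (η : ℝ) : ℝ := ∑' j : ℕ, (j : ℝ) ^ (-η)

lemma totalPathGain_nonneg (η : ℝ) : 0 ≤ totalPathGain η :=
  tsum_nonneg fun j => Real.rpow_nonneg j.cast_nonneg _

lemma sum_rpow_neg_le_totalPathGain {η : ℝ} (hη : 1 < η) (s : Finset ℕ) :
    ∑ j ∈ s, (j : ℝ) ^ (-η) ≤ totalPathGain η :=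
  (Real.summable_nat_rpow.2 (neg_lt_neg hη)).sum_le_tsum s
    fun j _ => Real.rpow_nonneg j.cast_nonneg _

lemma sum_sq_sqrt_add_sqrt_le {η q : ℝ} (hη : 1 < η) (hq : 0 ≤ q) {s : Finset ℕ} {a b : ℕ → ℝ}
    (hs : ∀ j ∈ s, 1 ≤ j) (ha : ∀ j ∈ s, a j ∈ Set.Icc (0 : ℝ) 1)
    (hb : ∀ j ∈ s, b j ∈ Set.Icc (0 : ℝ) 1) :
    ∑ j ∈ s, (√((j : ℝ) ^ (-η) * a j * q) + √(((j : ℝ) + 1) ^ (-η) * b j * q)) ^ 2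
      ≤ 4 * totalPathGain η * q := by
  calc ∑ j ∈ s, (√((j : ℝ) ^ (-η) * a j * q) + √(((j : ℝ) + 1) ^ (-η) * b j * q)) ^ 2
      ≤ ∑ j ∈ s, 4 * (j : ℝ) ^ (-η) * q := by
        refine Finset.sum_le_sum fun j hj => ?_
        have hj_pos : (0 : ℝ) < j := by exact_mod_cast hs j hj
        exact sq_sqrt_add_sqrt_le_of_mem_Icc (by positivity) (by positivity)
          (Real.rpow_le_rpow_of_nonpos hj_pos (by linarith) (by linarith)) (ha j hj) (hb j hj) hq
    _ = 4 * (∑ j ∈ s, (j : ℝ) ^ (-η)) * q := by rw [← Finset.sum_mul, ← Finset.mul_sum]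
    _ ≤ 4 * totalPathGain η * q := by
        gcongr
        exact sum_rpow_neg_le_totalPathGain hη s

lemma two_rpow_neg_mul_le_Psig (η κ P : ℝ) (t : ℕ) (α : ℕ → ℝ) :
    (2 : ℝ) ^ (-η) * (κ * P) ≤ Psig η κ P t α := by
  calc (2 : ℝ) ^ (-η) * (κ * P)
      = 2 ^ (-η) * (1 - α (t - 2)) * (κ * P) + 2 ^ (-η) * α (t - 2) * (κ * P) := by ring
    _ ≤ Psig η κ P t α := by
        refine add_le_add (le_sq_add_sqrt (Real.sqrt_nonneg _) _) ?_
        rw [add_comm (√_)]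
        exact le_sq_add_sqrt (Real.sqrt_nonneg _) _

lemma Pint_pos {η κ P : ℝ} {T t : ℕ} {α : ℕ → ℝ} (hq : 0 < κ * P) (ht : 1 ≤ t) (htT : t + 2 ≤ T)
    (hα : α 1 ≤ 1) : 0 < Pint η κ P T t α := by
  have ht' : (1 : ℝ) ≤ t := by exact_mod_cast ht
  have htT' : (t : ℝ) + 2 ≤ T := by exact_mod_cast htT
  have first_node : 0 ≤ ((t : ℝ) - 1) ^ (-η) * (1 - α 1) * (κ * P) :=
    mul_nonneg (mul_nonneg (Real.rpow_nonneg (by linarith) _) (by linarith)) hq.le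
  have last_node : 0 < √(((T : ℝ) - t - 1) ^ (-η) * (κ * P)) :=
    Real.sqrt_pos.2 (mul_pos (Real.rpow_pos_of_pos (by linarith) _) hq)
  exact add_pos_of_nonneg_of_pos (add_nonneg (add_nonneg (by positivity) first_node)
    (by positivity)) (pow_pos (add_pos_of_nonneg_of_pos (Real.sqrt_nonneg _) last_node) 2)

lemma Pint_le {η κ P : ℝ} {T t : ℕ} {α : ℕ → ℝ} (hη : 1 < η) (hq : 0 ≤ κ * P) (ht : 2 ≤ t)
    (htT : t + 3 ≤ T) (hα : ∀ i, 1 ≤ i → i ≤ T - 2 → α i ∈ Set.Icc (0 : ℝ) 1) :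
    Pint η κ P T t α ≤ (8 * totalPathGain η + 5) * (κ * P) := by
  have ht' : (2 : ℝ) ≤ t := by exact_mod_cast ht
  have htT' : (t : ℝ) + 3 ≤ T := by exact_mod_cast htT
  have hα' : ∀ i, 1 ≤ i → i ≤ T - 2 → 1 - α i ∈ Set.Icc (0 : ℝ) 1 := fun i h₁ h₂ =>
    Set.Icc.mem_iff_one_sub_mem.mp (hα i h₁ h₂)
  have gain_le_one : ∀ d : ℝ, 1 ≤ d → d ^ (-η) ≤ 1 := fun d hd =>
    Real.rpow_le_one_of_one_le_of_nonpos hd (by linarith)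
  have upstream := sum_sq_sqrt_add_sqrt_le (s := Finset.Icc 3 (t - 2)) (a := fun j => 1 - α (t - j))
    (b := fun j => α (t - j - 1)) hη hq (by grind) (by grind) (by grind)
  have first_node : ((t : ℝ) - 1) ^ (-η) * (1 - α 1) * (κ * P) ≤ κ * P :=
    mul_le_of_le_one_left hq <| mul_le_one₀ (gain_le_one _ (by linarith))
      (hα' 1 le_rfl (by omega)).1 (hα' 1 le_rfl (by omega)).2
  have downstream := sum_sq_sqrt_add_sqrt_le (s := Finset.Icc 1 (T - t - 3))
    (a := fun j => α (t + j)) (b := fun j => 1 - α (t + j + 1))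
    hη hq (by grind) (by grind) (by grind)
  have last_nodes : (√(((T : ℝ) - t - 2) ^ (-η) * α (T - 2) * (κ * P)) +
      √(((T : ℝ) - t - 1) ^ (-η) * (κ * P))) ^ 2 ≤ 4 * (κ * P) := by
    have h := sq_sqrt_add_sqrt_le_of_mem_Icc (g := ((T : ℝ) - t - 2) ^ (-η))
      (h := ((T : ℝ) - t - 1) ^ (-η)) (b := 1) (Real.rpow_nonneg (by linarith) _)
      (Real.rpow_nonneg (by linarith) _)
      (Real.rpow_le_rpow_of_nonpos (by linarith) (by linarith) (by linarith))
      (hα (T - 2) (by omega) le_rfl) (by simp) hq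
    rw [mul_one] at h
    exact h.trans (by nlinarith [gain_le_one ((T : ℝ) - t - 2) (by linarith)])
  unfold Pint
  linarith

lemma half_logb_le_Rt {η κ P N σ ι : ℝ} {T t : ℕ} {α : ℕ → ℝ} (hσ : 0 ≤ σ)
    (hsig : σ ≤ Psig η κ P t α) (hpos : 0 < Pint η κ P T t α + N) (hint : Pint η κ P T t α ≤ ι) :
    1 / 2 * Real.logb 2 (1 + σ / (ι + N)) ≤ Rt η κ P N T t α := by
  have hsnr : σ / (ι + N) ≤ Psig η κ P t α / (Pint η κ P T t α + N) :=
    div_le_div₀ (hσ.trans hsig) hsig hpos (by linarith)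
  have hsnr_nonneg : 0 ≤ σ / (ι + N) := div_nonneg hσ (by linarith)
  unfold Rt
  gcongr
  exact one_lt_two

theorem rates_bounded_away_from_zero_general
    (η κ P N : ℝ) (hη : 1 < η) (hκ : 0 < κ) (hP : 0 < P) (hN : 0 ≤ N) :
    ∃ δ : ℝ, 0 < δ ∧ ∀ (T : ℕ) (α : ℕ → ℝ),
      (∀ i, 1 ≤ i → i ≤ T - 2 → α i ∈ Set.Icc (0 : ℝ) 1) →
        ∀ t : ℕ, 4 ≤ t → t ≤ T - 3 → δ ≤ Rt η κ P N T t α := by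
  have hq : 0 < κ * P := mul_pos hκ hP
  have hS := totalPathGain_nonneg η
  have hsnr : 0 < 2 ^ (-η) * (κ * P) / ((8 * totalPathGain η + 5) * (κ * P) + N) := by positivity
  refine ⟨1 / 2 * Real.logb 2 (1 + 2 ^ (-η) * (κ * P) / ((8 * totalPathGain η + 5) * (κ * P) + N)),
    mul_pos one_half_pos (Real.logb_pos one_lt_two (by linarith)), fun T α hα t ht htT => ?_⟩
  have hint_pos : 0 < Pint η κ P T t α :=
    Pint_pos hq (by omega) (by omega) (hα 1 le_rfl (by omega)).2
  exact half_logb_le_Rt (by positivity) (two_rpow_neg_mul_le_Psig η κ P t α) (by linarith)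
    (Pint_le hη hq.le (by omega) (by omega) hα)

/-- The two-hop myopic decode-forward reception rates remain bounded away from
zero uniformly in the network size `T`: there is a `δ > 0` such that for every
`T ≥ 7` one can choose power splits `α_1, …, α_{T−2} ∈ [0,1]` making every
interior reception rate at least `δ`. -/
theorem rates_bounded_away_from_zero
    (η κ P N : ℝ) (hη : 2 ≤ η) (hκ : 0 < κ) (hP : 0 < P) (hN : 0 < N) :
    ∃ δ : ℝ, 0 < δ ∧ ∀ T : ℕ, 7 ≤ T →
      ∃ α : ℕ → ℝ, (∀ i, 1 ≤ i → i ≤ T - 2 → α i ∈ Set.Icc (0 : ℝ) 1) ∧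
        ∀ t : ℕ, 4 ≤ t → t ≤ T - 3 → δ ≤ Rt η κ P N T t α := by
  obtain ⟨δ, hδ, hrate⟩ :=
    rates_bounded_away_from_zero_general η κ P N (by linarith) hκ hP hN.le
  exact ⟨δ, hδ, fun T _ => ⟨0, by simp, hrate T 0 (by simp)⟩⟩
end

section
/- Let P₁, P₂, P₃ > 0 and d₃₄ > 0 with d₁₄ = d₂₄ and d₁₄² = (√3/2 + d₃₄)² + 1/4. If P₁ + P₂ ≤ (P₃/d₃₄²)/(1 + P₁/d₁₄² + P₂/d₂₄²), then R_1-hop = R_omniscient = (1/2) log₂(1 + P₁ + P₂); that is, when the sources transmit at sufficiently low power relative to the relay, one-hop myopic decode-forward achieves the same sum rate as omniscient decode-forward. -/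
/-! Taking `α ≠ 0` only costs relay rate, so the omniscient sum rate never exceeds
`R'₃(0) = ½ log₂(1 + P₁ + P₂)`, and it attains this value as soon as `R'₃(0) ≤ R'₄(0, β)`.
At `α = 0` the omniscient destination collects the source powers as signal, whereas the one-hop
destination suffers them as noise. Hence once the one-hop destination is not the bottleneck, the
omniscient one is not either, and the relay limits both schemes to the same rate. -/

open Real

/-- Achievable sum rate of one-hop myopic decode-forward in the four-node
Gaussian multiple-access relay channel. -/
noncomputable def R1hop (P1 P2 P3 d14 d24 d34 : ℝ) : ℝ :=
  min ((1 / 2) * Real.logb 2 (1 + P1 + P2))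
      ((1 / 2) * Real.logb 2 (1 + (P3 / d34 ^ 2) / (1 + P1 / d14 ^ 2 + P2 / d24 ^ 2)))

/-- Achievable sum rate of omniscient decode-forward in the four-node Gaussian
multiple-access relay channel: the supremum over power splits
`α₁, α₂ ∈ [0,1]`, `β₁, β₂ ≥ 0`, `β₁ + β₂ = 1` of `min{R'₃(α), R'₄(α, β)}`. -/
noncomputable def Romniscient (P1 P2 P3 d14 d24 d34 : ℝ) : ℝ :=
  sSup {r : ℝ | ∃ a1 a2 b1 b2 : ℝ,
    a1 ∈ Set.Icc (0 : ℝ) 1 ∧ a2 ∈ Set.Icc (0 : ℝ) 1 ∧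
    0 ≤ b1 ∧ 0 ≤ b2 ∧ b1 + b2 = 1 ∧
    r = min ((1 / 2) * Real.logb 2 (1 + (1 - a1) * P1 + (1 - a2) * P2))
            ((1 / 2) * Real.logb 2 (1 + P1 / d14 ^ 2 + P2 / d24 ^ 2 + P3 / d34 ^ 2
              + 2 * Real.sqrt (a1 * b1 * P1 * P3) / (d14 * d34)
              + 2 * Real.sqrt (a2 * b2 * P2 * P3) / (d24 * d34)))}

section

variable {P1 P2 P3 d14 d24 d34 : ℝ}

theorem half_logb_two_le_half_logb_two {x y : ℝ} (hx : 0 < x) (hxy : x ≤ y) :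
    (1 / 2) * Real.logb 2 x ≤ (1 / 2) * Real.logb 2 y :=
  mul_le_mul_of_nonneg_left (Real.logb_le_logb_of_le one_lt_two hx hxy) one_half_pos.le

/-- The rate `R'₃(α)` at which the relay decodes in the omniscient scheme, with `a1`, `a2` for
`α₁`, `α₂`. -/
noncomputable def omniscientRelayRate (P1 P2 a1 a2 : ℝ) : ℝ :=
  (1 / 2) * Real.logb 2 (1 + (1 - a1) * P1 + (1 - a2) * P2)

/-- The rate `R'₄(α, β)` at which the destination decodes in the omniscient scheme, with `a1`,
`a2`, `b1`, `b2` for `α₁`, `α₂`, `β₁`, `β₂`. -/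
noncomputable def omniscientDestRate (P1 P2 P3 d14 d24 d34 a1 a2 b1 b2 : ℝ) : ℝ :=
  (1 / 2) * Real.logb 2 (1 + P1 / d14 ^ 2 + P2 / d24 ^ 2 + P3 / d34 ^ 2
    + 2 * Real.sqrt (a1 * b1 * P1 * P3) / (d14 * d34)
    + 2 * Real.sqrt (a2 * b2 * P2 * P3) / (d24 * d34))

/-- The sum rates `min{R'₃(α), R'₄(α, β)}` over all admissible power splits; `Romniscient` is the
supremum of this set. -/
def omniscientRates (P1 P2 P3 d14 d24 d34 : ℝ) : Set ℝ :=
  {r | ∃ a1 a2 b1 b2 : ℝ, a1 ∈ Set.Icc (0 : ℝ) 1 ∧ a2 ∈ Set.Icc (0 : ℝ) 1 ∧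
    0 ≤ b1 ∧ 0 ≤ b2 ∧ b1 + b2 = 1 ∧
    r = min (omniscientRelayRate P1 P2 a1 a2)
      (omniscientDestRate P1 P2 P3 d14 d24 d34 a1 a2 b1 b2)}

theorem omniscientRelayRate_le_of_le {a1 a2 a1' a2' : ℝ} (hP1 : 0 ≤ P1) (hP2 : 0 ≤ P2)
    (h1 : a1 ≤ a1') (h2 : a2 ≤ a2') (ha1' : a1' ≤ 1) (ha2' : a2' ≤ 1) :
    omniscientRelayRate P1 P2 a1' a2' ≤ omniscientRelayRate P1 P2 a1 a2 := by
  have hfresh1 : 0 ≤ (1 - a1') * P1 := mul_nonneg (sub_nonneg.2 ha1') hP1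
  have hfresh2 : 0 ≤ (1 - a2') * P2 := mul_nonneg (sub_nonneg.2 ha2') hP2
  exact half_logb_two_le_half_logb_two (by linarith) (by gcongr)

theorem omniscientRelayRate_zero_zero (P1 P2 : ℝ) :
    omniscientRelayRate P1 P2 0 0 = (1 / 2) * Real.logb 2 (1 + P1 + P2) := by
  simp [omniscientRelayRate]

theorem omniscientDestRate_zero_zero (P1 P2 P3 d14 d24 d34 b1 b2 : ℝ) :
    omniscientDestRate P1 P2 P3 d14 d24 d34 0 0 b1 b2 =
      (1 / 2) * Real.logb 2 (1 + (P1 / d14 ^ 2 + P2 / d24 ^ 2 + P3 / d34 ^ 2)) := by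
  simp [omniscientDestRate, add_assoc]

theorem omniscientRelayRate_zero_zero_mem_upperBounds (hP1 : 0 ≤ P1) (hP2 : 0 ≤ P2) :
    omniscientRelayRate P1 P2 0 0 ∈ upperBounds (omniscientRates P1 P2 P3 d14 d24 d34) := by
  rintro _ ⟨a1, a2, b1, b2, ⟨ha1, ha1'⟩, ⟨ha2, ha2'⟩, -, -, -, rfl⟩
  exact (min_le_left _ _).trans (omniscientRelayRate_le_of_le hP1 hP2 ha1 ha2 ha1' ha2')

theorem omniscientRelayRate_zero_zero_mem_omniscientRates (hP : 0 < 1 + P1 + P2)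
    (h : P1 + P2 ≤ P1 / d14 ^ 2 + P2 / d24 ^ 2 + P3 / d34 ^ 2) :
    omniscientRelayRate P1 P2 0 0 ∈ omniscientRates P1 P2 P3 d14 d24 d34 := by
  have hrate : omniscientRelayRate P1 P2 0 0 ≤
      omniscientDestRate P1 P2 P3 d14 d24 d34 0 0 1 0 := by
    rw [omniscientRelayRate_zero_zero, omniscientDestRate_zero_zero]
    exact half_logb_two_le_half_logb_two hP (by linarith)
  exact ⟨0, 0, 1, 0, by simp, by simp, zero_le_one, le_rfl, add_zero 1, (min_eq_left hrate).symm⟩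

theorem romniscient_eq_of_le_received_power (hP1 : 0 ≤ P1) (hP2 : 0 ≤ P2)
    (h : P1 + P2 ≤ P1 / d14 ^ 2 + P2 / d24 ^ 2 + P3 / d34 ^ 2) :
    Romniscient P1 P2 P3 d14 d24 d34 = (1 / 2) * Real.logb 2 (1 + P1 + P2) := by
  have hgreatest :
      IsGreatest (omniscientRates P1 P2 P3 d14 d24 d34) (omniscientRelayRate P1 P2 0 0) :=
    ⟨omniscientRelayRate_zero_zero_mem_omniscientRates (by positivity) h,
      omniscientRelayRate_zero_zero_mem_upperBounds hP1 hP2⟩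
  exact hgreatest.csSup_eq.trans (omniscientRelayRate_zero_zero P1 P2)

theorem r1hop_eq_of_le_sinr (hP : 0 < 1 + P1 + P2)
    (h : P1 + P2 ≤ (P3 / d34 ^ 2) / (1 + P1 / d14 ^ 2 + P2 / d24 ^ 2)) :
    R1hop P1 P2 P3 d14 d24 d34 = (1 / 2) * Real.logb 2 (1 + P1 + P2) :=
  min_eq_left (half_logb_two_le_half_logb_two hP (by linarith))

theorem sinr_le_received_power {signal noise : ℝ} (hsignal : 0 ≤ signal) (hnoise : 0 ≤ noise) :
    signal / (1 + noise) ≤ noise + signal :=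
  (div_le_self hsignal (le_add_of_nonneg_right hnoise)).trans (le_add_of_nonneg_left hnoise)

theorem myopic_eq_omniscient_low_source_power_general
    (hP1 : 0 < P1) (hP2 : 0 < P2) (hP3 : 0 < P3) (hd14 : 0 < d14) (hd24 : 0 < d24) (hd34 : 0 < d34)
    (hlow : P1 + P2 ≤ (P3 / d34 ^ 2) / (1 + P1 / d14 ^ 2 + P2 / d24 ^ 2)) :
    R1hop P1 P2 P3 d14 d24 d34 = (1 / 2) * Real.logb 2 (1 + P1 + P2)
    ∧ Romniscient P1 P2 P3 d14 d24 d34 = (1 / 2) * Real.logb 2 (1 + P1 + P2) := by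
  have hrelay : 0 < P3 / d34 ^ 2 := div_pos hP3 (pow_pos hd34 2)
  have hsources : 0 < P1 / d14 ^ 2 + P2 / d24 ^ 2 :=
    add_pos (div_pos hP1 (pow_pos hd14 2)) (div_pos hP2 (pow_pos hd24 2))
  have hpower : P1 + P2 ≤ P1 / d14 ^ 2 + P2 / d24 ^ 2 + P3 / d34 ^ 2 := by
    rw [add_assoc 1] at hlow
    exact hlow.trans (sinr_le_received_power hrelay.le hsources.le)
  exact ⟨r1hop_eq_of_le_sinr (by positivity) hlow,
    romniscient_eq_of_le_received_power hP1.le hP2.le hpower⟩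

end

/-- When the sources transmit at low power relative to the relay, i.e.
`P₁ + P₂ ≤ (P₃/d₃₄²)/(1 + P₁/d₁₄² + P₂/d₂₄²)`, one-hop myopic decode-forward
achieves the same sum rate `½ log₂(1 + P₁ + P₂)` as omniscient decode-forward. -/
theorem myopic_eq_omniscient_low_source_power
    (P1 P2 P3 d34 d14 d24 : ℝ)
    (hP1 : 0 < P1) (hP2 : 0 < P2) (hP3 : 0 < P3) (hd34 : 0 < d34)
    (hd14pos : 0 < d14) (hd : d14 = d24)
    (hd14 : d14 ^ 2 = (Real.sqrt 3 / 2 + d34) ^ 2 + 1 / 4)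
    (hlow : P1 + P2 ≤ (P3 / d34 ^ 2) / (1 + P1 / d14 ^ 2 + P2 / d24 ^ 2)) :
    R1hop P1 P2 P3 d14 d24 d34 = (1 / 2) * Real.logb 2 (1 + P1 + P2)
    ∧ Romniscient P1 P2 P3 d14 d24 d34 = (1 / 2) * Real.logb 2 (1 + P1 + P2) := by
  exact myopic_eq_omniscient_low_source_power_general hP1 hP2 hP3 hd14pos (hd ▸ hd14pos) hd34 hlow
end
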